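/- Let I ⊆ ℝ be a nondegenerate interval, n ∈ ℕ, and let ω be an n-dimensional positive Chebyshev system over I. A function f : I → ℝ is ω-Jensen convex on I if and only if, for every p ∈ I, there exists a neighborhood U of p such that f is ω-Jensen convex on U ∩ I; that is, ω-Jensen convexity is a localizable property. -/

import Mathlib

/-- `Phi ω x` is the determinant `det(ωᵢ(xⱼ))` of an `n`-tuple of functions
evaluated at an `n`-tuple of points. -/
noncomputable def Phi {n : ℕ} (ω : Fin n → ℝ → ℝ) (x : Fin n → ℝ) : ℝ :=
  (Matrix.of fun i j => ω i (x j)).det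

/-- `ω` is an `n`-dimensional positive Chebyshev system over `H`:
`Phi ω` is positive on all strictly increasing `n`-tuples of elements of `H`. -/
def IsPosChebyshev {n : ℕ} (ω : Fin n → ℝ → ℝ) (H : Set ℝ) : Prop :=
  ∀ x : Fin n → ℝ, StrictMono x → (∀ j, x j ∈ H) → 0 < Phi ω x

/-- The partial sum `t₁ + ⋯ + tⱼ` (empty for `j = 0`, everything for `j = n`). -/
noncomputable def psum {n : ℕ} (t : Fin n → ℝ) (j : Fin (n + 1)) : ℝ :=
  ∑ i ∈ Finset.univ.filter (fun i : Fin n => (i : ℕ) < (j : ℕ)), t i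

/-- `f` is `(t,ω)`-convex on `J`:
`Φ_{(ω,f)}(x, x+t₁h, x+(t₁+t₂)h, …, x+(t₁+⋯+tₙ)h) ≥ 0`
for all `x ∈ J` and `h > 0` with `x+(t₁+⋯+tₙ)h ∈ J`. -/
def TOmegaConvexOn {n : ℕ} (ω : Fin n → ℝ → ℝ) (t : Fin n → ℝ) (J : Set ℝ) (f : ℝ → ℝ) : Prop :=
  ∀ x ∈ J, ∀ h : ℝ, 0 < h → x + psum t (Fin.last n) * h ∈ J →
    0 ≤ Phi (Fin.snoc ω f) (fun j => x + psum t j * h)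

lemma psum_one {n : ℕ} (j : Fin (n + 1)) : psum (fun _ : Fin n => (1 : ℝ)) j = (j : ℕ) := by
  unfold psum
  rw [Finset.sum_const, nsmul_eq_mul, mul_one]
  congr 1
  have hj := j.isLt
  rw [Fin.card_filter_val_lt]
  omega

lemma Phi_snoc_expand {n : ℕ} (ω : Fin n → ℝ → ℝ) (g : ℝ → ℝ) (x : Fin (n + 1) → ℝ) :
    Phi (Fin.snoc ω g : Fin (n + 1) → ℝ → ℝ) x =
      ∑ j : Fin (n + 1), (-1) ^ (n + (j : ℕ)) * g (x j) * Phi ω (fun i => x (j.succAbove i)) := by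
  unfold Phi
  rw [Matrix.det_succ_row _ (Fin.last n)]
  refine Finset.sum_congr rfl fun j _ => ?_
  have : (Matrix.of fun i j => (Fin.snoc ω g : Fin (n + 1) → ℝ → ℝ) i (x j)).submatrix
      (Fin.last n).succAbove j.succAbove = Matrix.of fun i k => ω i (x (j.succAbove k)) := by
    ext a b
    simp [Matrix.submatrix_apply]
  rw [this]
  simp

lemma Phi_snoc_self {n : ℕ} (ω : Fin n → ℝ → ℝ) (i : Fin n) (x : Fin (n + 1) → ℝ) :
    Phi (Fin.snoc ω (ω i) : Fin (n + 1) → ℝ → ℝ) x = 0 := by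
  unfold Phi
  refine Matrix.det_zero_of_row_eq (i := i.castSucc) (j := Fin.last n)
    (Fin.castSucc_lt_last i).ne ?_
  ext k
  simp

lemma Phi_snoc_sub {n : ℕ} (ω : Fin n → ℝ → ℝ) (f : ℝ → ℝ) (c : Fin n → ℝ)
    (x : Fin (n + 1) → ℝ) :
    Phi (Fin.snoc ω (fun t => f t - ∑ i, c i * ω i t) : Fin (n + 1) → ℝ → ℝ) x =
      Phi (Fin.snoc ω f : Fin (n + 1) → ℝ → ℝ) x := by
  have h : ∑ i, c i * Phi (Fin.snoc ω (ω i) : Fin (n + 1) → ℝ → ℝ) x = 0 := by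
    simp [Phi_snoc_self]
  rw [← sub_zero (Phi (Fin.snoc ω f : Fin (n + 1) → ℝ → ℝ) x), ← h]
  simp only [Phi_snoc_expand, Finset.mul_sum]
  rw [Finset.sum_comm, ← Finset.sum_sub_distrib]
  refine Finset.sum_congr rfl fun j _ => ?_
  rw [mul_sub, sub_mul, Finset.mul_sum, Finset.sum_mul]
  congr 1
  refine Finset.sum_congr rfl fun i _ => ?_
  ring

lemma exists_interp {n : ℕ} (ω : Fin n → ℝ → ℝ) (f : ℝ → ℝ) (y : Fin n → ℝ)
    (hy : 0 < Phi ω y) : ∃ c : Fin n → ℝ, ∀ j, f (y j) - ∑ i, c i * ω i (y j) = 0 := by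
  have hu : IsUnit (Matrix.of fun i j => ω i (y j)).det := isUnit_iff_ne_zero.2 hy.ne'
  refine ⟨Matrix.vecMul (fun j => f (y j)) (Matrix.of fun i j => ω i (y j))⁻¹, fun j => ?_⟩
  have h : Matrix.vecMul (Matrix.vecMul (fun j => f (y j)) (Matrix.of fun i j => ω i (y j))⁻¹)
      (Matrix.of fun i j => ω i (y j)) = fun j => f (y j) := by
    rw [Matrix.vecMul_vecMul, Matrix.nonsing_inv_mul _ hu, Matrix.vecMul_one]
  have h2 := congrFun h j
  simp only [Matrix.vecMul, dotProduct, Matrix.of_apply] at h2 ⊢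
  rw [h2, sub_self]

/-- Removing an inner point of an `(n+2)`-tuple. -/
lemma Phi_inner_nonneg {n : ℕ} (ω : Fin n → ℝ → ℝ) (f : ℝ → ℝ) (z : Fin (n + 2) → ℝ)
    (hpos : ∀ e : Fin n → Fin (n + 2), StrictMono e → 0 < Phi ω (fun i => z (e i)))
    (h0 : 0 ≤ Phi (Fin.snoc ω f : Fin (n + 1) → ℝ → ℝ) (fun i => z i.succ))
    (h1 : 0 ≤ Phi (Fin.snoc ω f : Fin (n + 1) → ℝ → ℝ) (fun i => z i.castSucc))
    (k : Fin (n + 2)) (hk0 : k ≠ 0) (hkl : k ≠ Fin.last (n + 1)) :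
    0 ≤ Phi (Fin.snoc ω f : Fin (n + 1) → ℝ → ℝ) (fun i => z (k.succAbove i)) := by
  have hmid : StrictMono (fun i : Fin n => i.castSucc.succ) := by
    intro a b hab
    simpa using hab
  have hM := hpos _ hmid
  obtain ⟨c, hc⟩ := exists_interp ω f (fun i : Fin n => z i.castSucc.succ) hM
  rw [← Phi_snoc_sub ω f c] at h0 h1 ⊢
  set g : ℝ → ℝ := fun t => f t - ∑ i, c i * ω i t with hg
  have hgz : ∀ m : Fin (n + 2), m ≠ 0 → m ≠ Fin.last (n + 1) → g (z m) = 0 := by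
    intro m hm0 hml
    obtain ⟨a, rfl⟩ := Fin.exists_succ_eq.2 hm0
    have ha : a ≠ Fin.last n := by
      rintro rfl
      exact hml (Fin.succ_last n)
    obtain ⟨b, rfl⟩ := Fin.exists_castSucc_eq.2 ha
    exact hc b
  have hlast : 0 ≤ g (z (Fin.last (n + 1))) := by
    rw [Phi_snoc_expand, Finset.sum_eq_single (Fin.last n)] at h0
    · simp only [Fin.succAbove_last, Fin.val_last, Fin.succ_last] at h0
      rw [Even.neg_one_pow ⟨n, rfl⟩, one_mul] at h0
      exact nonneg_of_mul_nonneg_left h0 hM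
    · intro b _ hb
      rw [hgz b.succ (Fin.succ_ne_zero b) (fun h => hb (Fin.succ_injective _ (by simpa using h)))]
      simp
    · simp
  have hzero : 0 ≤ (-1) ^ n * g (z 0) := by
    rw [Phi_snoc_expand, Finset.sum_eq_single 0] at h1
    · simp only [Fin.succAbove_zero, Fin.val_zero, Fin.castSucc_zero, add_zero] at h1
      refine nonneg_of_mul_nonneg_left h1 ?_
      exact hM
    · intro b _ hb
      rw [hgz b.castSucc (by simpa [Fin.castSucc_eq_zero_iff] using hb) (Fin.castSucc_lt_last b).ne]
      simp
    · simp
  rw [Phi_snoc_expand]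
  refine Finset.sum_nonneg fun j _ => ?_
  have hP : 0 < Phi ω (fun i => z (k.succAbove (j.succAbove i))) :=
    hpos (fun i => k.succAbove (j.succAbove i))
      ((Fin.strictMono_succAbove k).comp (Fin.strictMono_succAbove j))
  refine mul_nonneg ?_ hP.le
  by_cases hj0 : j = 0
  · subst hj0
    rw [Fin.succAbove_ne_zero_zero hk0]
    simpa using hzero
  by_cases hjl : j = Fin.last n
  · subst hjl
    rw [Fin.succAbove_ne_last_last hkl]
    simp only [Fin.val_last]
    rw [Even.neg_one_pow ⟨n, rfl⟩, one_mul]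
    exact hlast
  rw [hgz]
  · simp
  · exact Fin.succAbove_ne_zero hk0 hj0
  · exact Fin.succAbove_ne_last hkl hjl

lemma insert_strictMono {n : ℕ} (e : Fin (n + 1) → ℕ) (he : StrictMono e) (j : Fin n)
    (hj : e j.castSucc + 1 < e j.succ) :
    StrictMono (Fin.insertNth (α := fun _ => ℕ) j.succ.castSucc (e j.castSucc + 1) e) := by
  have key : ∀ a : Fin (n + 1),
      (j.succ.castSucc < j.succ.castSucc.succAbove a → e j.castSucc + 1 < e a) ∧
      (j.succ.castSucc.succAbove a < j.succ.castSucc → e a < e j.castSucc + 1) := by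
    intro a
    constructor
    · intro h
      rw [Fin.lt_succAbove_iff_le_castSucc] at h
      exact hj.trans_le (he.monotone (by simpa [Fin.le_def, Fin.lt_def, Nat.succ_le_iff] using h))
    · intro h
      rw [Fin.succAbove_lt_iff_castSucc_lt] at h
      have : a ≤ j.castSucc := by
        rw [Fin.castSucc_lt_castSucc_iff] at h
        exact Fin.le_castSucc_iff.2 h
      exact Nat.lt_succ_of_le (he.monotone this)
  intro a b hab
  induction a using Fin.succAboveCases j.succ.castSucc with
  | x =>
    induction b using Fin.succAboveCases j.succ.castSucc with
    | x => exact absurd hab (lt_irrefl _)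
    | p b => simpa using (key b).1 hab
  | p a =>
    induction b using Fin.succAboveCases j.succ.castSucc with
    | x => simpa using (key a).2 hab
    | p b => simpa using he ((Fin.strictMono_succAbove _).lt_iff_lt.1 hab)

lemma all_of_consecutive {n : ℕ} (ω : Fin n → ℝ → ℝ) (f : ℝ → ℝ) (y : ℕ → ℝ) (M : ℕ)
    (hpos : ∀ e : Fin n → ℕ, StrictMono e → (∀ i, e i ≤ M) → 0 < Phi ω (fun i => y (e i)))
    (hcons : ∀ m, m + n ≤ M →
      0 ≤ Phi (Fin.snoc ω f : Fin (n + 1) → ℝ → ℝ) (fun i => y (m + (i : ℕ)))) :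
    ∀ (s : ℕ) (e : Fin (n + 1) → ℕ), StrictMono e → e (Fin.last n) ≤ M →
      e (Fin.last n) ≤ e 0 + s →
      0 ≤ Phi (Fin.snoc ω f : Fin (n + 1) → ℝ → ℝ) (fun i => y (e i)) := by
  intro s
  induction s with
  | zero =>
    intro e he hM hs
    have hl : Fin.last n = 0 := by
      have := he.le_iff_le.1 (by simpa using hs)
      exact le_antisymm this (Fin.zero_le _)
    have hn : n = 0 := by simpa using congrArg Fin.val hl
    subst hn
    convert hcons (e 0) (by simpa using hM) using 3 with i
    have : i = 0 := Fin.ext (by simp)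
    subst this
    simp
  | succ s ih =>
    intro e he hM hs
    by_cases hgap : ∃ j : Fin n, e j.castSucc + 1 < e j.succ
    · obtain ⟨j, hj⟩ := hgap
      have hE := insert_strictMono e he j hj
      set k : Fin (n + 2) := j.succ.castSucc with hk
      set E : Fin (n + 2) → ℕ := Fin.insertNth (α := fun _ => ℕ) k (e j.castSucc + 1) e with hEdef
      have hEe : ∀ i, E (k.succAbove i) = e i := by
        intro i
        simp [hEdef]
      have hk0 : k ≠ 0 := by simp [hk, Fin.ext_iff]
      have hkl : k ≠ Fin.last (n + 1) := (Fin.castSucc_lt_last _).ne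
      have hE0 : E 0 = e 0 := by rw [← hEe 0, Fin.succAbove_ne_zero_zero hk0]
      have hEl : E (Fin.last (n + 1)) = e (Fin.last n) := by
        rw [← hEe (Fin.last n), Fin.succAbove_ne_last_last hkl]
      have hEM : ∀ i, E i ≤ M := fun i => (hE.monotone (Fin.le_last i)).trans (hEl ▸ hM)
      have main := Phi_inner_nonneg ω f (fun i => y (E i))
        (fun e' he' => hpos (fun i => E (e' i)) (hE.comp he') (fun i => hEM _)) ?_ ?_ k hk0 hkl
      · simpa only [hEe] using main
      · refine ih (fun i => E i.succ) (hE.comp (Fin.strictMono_succ)) (hEM _) ?_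
        have : E 0 < E (Fin.succ 0) := hE (Fin.succ_pos 0)
        have h3 : E (Fin.succ (Fin.last n)) = e (Fin.last n) := hEl
        change E (Fin.succ (Fin.last n)) ≤ E (Fin.succ 0) + s
        omega
      · refine ih (fun i => E i.castSucc) (hE.comp (Fin.strictMono_castSucc)) (hEM _) ?_
        have : E (Fin.last n).castSucc < E (Fin.last (n + 1)) := hE (Fin.castSucc_lt_last _)
        simp only [Fin.castSucc_zero]
        omega
    · push Not at hgap
      have hlin : ∀ i : Fin (n + 1), e i = e 0 + (i : ℕ) := by
        intro i
        induction i using Fin.induction with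
        | zero => simp
        | succ i ihi =>
          have h1 := hgap i
          have h2 : e i.castSucc < e i.succ := he (Fin.castSucc_lt_succ)
          simp only [Fin.val_castSucc, Fin.val_succ] at ihi ⊢
          omega
      have h := hcons (e 0) (by have := hlin (Fin.last n); simp at this; omega)
      simp only [← hlin] at h
      exact h

/-- **Corollary 9 (localizability of ω-Jensen convexity).** `f` is `ω`-Jensen convex
on `I` (i.e. `(𝟏ₙ,ω)`-convex on `I`) if and only if every point `p ∈ I` has a
neighborhood `U` such that `f` is `ω`-Jensen convex on `U ∩ I`. -/
theorem jensenConvexOn_iff_locally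
    (n : ℕ) (hn : 0 < n) (I : Set ℝ) (hI : I.OrdConnected)
    (hne : ∃ a ∈ I, ∃ b ∈ I, a < b)
    (ω : Fin n → ℝ → ℝ) (hω : IsPosChebyshev ω I) (f : ℝ → ℝ) :
    TOmegaConvexOn ω (fun _ => (1 : ℝ)) I f ↔
      ∀ p ∈ I, ∃ U ∈ nhds p, TOmegaConvexOn ω (fun _ => (1 : ℝ)) (U ∩ I) f := by
  constructor
  · intro h p _
    exact ⟨Set.univ, Filter.univ_mem, by simpa using h⟩
  intro hloc x hx h hh hxh
  simp only [psum_one, Fin.val_last] at hxh ⊢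
  have hsub : Set.Icc x (x + n * h) ⊆ I := hI.out hx hxh
  choose! U hU hUc using hloc
  obtain ⟨δ, hδ, hleb⟩ := lebesgue_number_lemma_of_metric (ι := I)
    (s := Set.Icc x (x + n * h)) (c := fun p => interior (U p)) isCompact_Icc
    (fun p => isOpen_interior)
    (fun p hp => Set.mem_iUnion.2 ⟨⟨p, hsub hp⟩, mem_interior_iff_mem_nhds.2 (hU p (hsub hp))⟩)
  obtain ⟨N, hN⟩ := exists_nat_gt (n * h / δ)
  have hnR : (0 : ℝ) < n := by exact_mod_cast hn
  have hNpos : (0 : ℝ) < N := lt_of_le_of_lt (by positivity) hN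
  have hd : n * (h / N) < δ := by
    rw [div_lt_iff₀ hδ] at hN
    rw [← mul_div_assoc, div_lt_iff₀ hNpos]
    linarith
  set d : ℝ := h / N with hddef
  have hdpos : 0 < d := by positivity
  have hdN : N * d = h := by rw [hddef]; field_simp
  let y : ℕ → ℝ := fun m => x + m * d
  have hyI : ∀ m, m ≤ n * N → y m ∈ Set.Icc x (x + n * h) := by
    intro m hm
    have hm' : (m : ℝ) ≤ n * N := by exact_mod_cast hm
    refine ⟨le_add_of_nonneg_right (by positivity), ?_⟩
    have : (m : ℝ) * d ≤ n * N * d := mul_le_mul_of_nonneg_right hm' hdpos.le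
    change x + m * d ≤ x + n * h
    rw [← hdN]
    linarith
  have hymono : StrictMono y := by
    intro a b hab
    have : (a : ℝ) < b := by exact_mod_cast hab
    have := mul_lt_mul_of_pos_right this hdpos
    change x + a * d < x + b * d
    linarith
  have hN0 : 0 < N := by exact_mod_cast hNpos
  have key := all_of_consecutive ω f y (n * N)
    (fun e he heM => hω _ (hymono.comp he) (fun i => hsub (hyI _ (heM i)))) ?_ (n * N)
    (fun i => (i : ℕ) * N) (fun a b hab => Nat.mul_lt_mul_of_pos_right hab hN0)
    (by simp) (by simp)
  · convert key using 3 with i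
    simp only [y]
    push_cast
    rw [mul_assoc, hdN]
  · intro m hm
    obtain ⟨p, hp⟩ := hleb (y m) (hyI m (by omega))
    have hend : y (m + n) = y m + n * d := by
      simp only [y]
      push_cast
      ring
    have h1 : y m ∈ U p := interior_subset (hp (Metric.mem_ball_self hδ))
    have h2 : y (m + n) ∈ U p := by
      refine interior_subset (hp ?_)
      rw [hend, Metric.mem_ball, Real.dist_eq, add_sub_cancel_left, abs_of_nonneg (by positivity)]
      exact hd
    have := hUc p p.2 (y m) ⟨h1, hsub (hyI m (by omega))⟩ d hdpos (by
      simp only [psum_one, Fin.val_last]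
      rw [← hend]
      exact ⟨h2, hsub (hyI _ hm)⟩)
    convert this using 3 with i
    simp only [psum_one, y]
    push_cast
    ring
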